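/- arXiv:1610.00394 — 3 statements merged into one kernel-verified Lean document; each statement's English description precedes it below -/
import Mathlib

section
/- Let (x,u) be an admissible pair with initial condition x₀, let μ(·|x,u) be its occupation measure and δ_{x(T)} its terminal measure. Then (μ(·|x,u), δ_{x(T)}) satisfies Liouville's equation: for every v ∈ C¹([0,T]×ℝⁿ), v(0,x₀) + ∫ L_F v dμ(·|x,u) = v(T,x(T)). -/
open MeasureTheory Set

noncomputable section

/-- The input constraint set `U = [-1,1]^m`. -/
def Ubox (m : ℕ) : Set (Fin m → ℝ) := Set.Icc (fun _ => (-1 : ℝ)) (fun _ => (1 : ℝ))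

/-- The controlled vector field `F(t,x,u) = f(t,x) + g(t,x) u`. -/
def Fvec {n m : ℕ} (f : ℝ × (Fin n → ℝ) → Fin n → ℝ)
    (g : ℝ × (Fin n → ℝ) → Fin n → Fin m → ℝ)
    (z : ℝ × (Fin n → ℝ) × (Fin m → ℝ)) : Fin n → ℝ :=
  fun k => f (z.1, z.2.1) k + ∑ j, g (z.1, z.2.1) k j * z.2.2 j

/-- `(L_F v)(t,x,u) = ∂v/∂t + Σ_k (∂v/∂x_k)·[F(t,x,u)]_k`. -/
def LFop {n m : ℕ} (f : ℝ × (Fin n → ℝ) → Fin n → ℝ)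
    (g : ℝ × (Fin n → ℝ) → Fin n → Fin m → ℝ)
    (v : ℝ × (Fin n → ℝ) → ℝ) (z : ℝ × (Fin n → ℝ) × (Fin m → ℝ)) : ℝ :=
  fderiv ℝ v (z.1, z.2.1) ((1 : ℝ), (0 : Fin n → ℝ)) +
    ∑ k, fderiv ℝ v (z.1, z.2.1) ((0 : ℝ), Pi.single k (1 : ℝ)) * Fvec f g z k

/-- An admissible pair: a Borel measurable control `u` with values in `U` and an
absolutely continuous trajectory `x` with `x(0) = x₀`, `x(T) ∈ X_T`, `x(t) ∈ X` on `[0,T]`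
and `ẋ = F(t,x,u)` a.e. (encoded in integral form). -/
def IsAdmissiblePair {n m : ℕ} (T : ℝ) (X XT : Set (Fin n → ℝ)) (x₀ : Fin n → ℝ)
    (f : ℝ × (Fin n → ℝ) → Fin n → ℝ) (g : ℝ × (Fin n → ℝ) → Fin n → Fin m → ℝ)
    (x : ℝ → Fin n → ℝ) (u : ℝ → Fin m → ℝ) : Prop :=
  Measurable u ∧ (∀ t ∈ Set.Icc (0 : ℝ) T, u t ∈ Ubox m) ∧
  x 0 = x₀ ∧ x T ∈ XT ∧ (∀ t ∈ Set.Icc (0 : ℝ) T, x t ∈ X) ∧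
  IntegrableOn (fun s => Fvec f g (s, x s, u s)) (Set.Icc (0 : ℝ) T) volume ∧
  ∀ t ∈ Set.Icc (0 : ℝ) T, x t = x₀ + ∫ s in Set.Icc (0 : ℝ) t, Fvec f g (s, x s, u s)

/-- The occupation measure of an admissible pair: the pushforward of Lebesgue measure
on `[0,T]` under `t ↦ (t, x(t), u(t))`. -/
def occupationMeasure {n m : ℕ} (T : ℝ) (x : ℝ → Fin n → ℝ) (u : ℝ → Fin m → ℝ) :
    Measure (ℝ × (Fin n → ℝ) × (Fin m → ℝ)) :=
  Measure.map (fun t => (t, x t, u t)) (volume.restrict (Set.Icc (0 : ℝ) T))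

/-!
Along an absolutely continuous trajectory `x`, the curve `t ↦ v (t, x t)` is absolutely continuous
and its derivative is almost everywhere `L_F v` at `(t, x t, u t)`, so the fundamental theorem of
calculus computes the integral of `L_F v` along the trajectory. This is the integral against the
occupation measure because a graph map `t ↦ (t, φ t)` is a measurable embedding, under which the
change of variables needs no measurability of the integrand.
-/

section AbsolutelyContinuous

open Filter AbsolutelyContinuousOnInterval

variable {X Y : Type*} [PseudoMetricSpace X] [PseudoMetricSpace Y] {f : ℝ → X} {g : ℝ → Y}
  {a b : ℝ}

lemma absolutelyContinuousOnInterval_of_dist_le_mul {K : ℝ}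
    (hg : AbsolutelyContinuousOnInterval g a b)
    (hfg : ∀ s ∈ uIcc a b, ∀ t ∈ uIcc a b, dist (f s) (f t) ≤ K * dist (g s) (g t)) :
    AbsolutelyContinuousOnInterval f a b := by
  refine squeeze_zero' (.of_forall fun E ↦ Finset.sum_nonneg fun _ _ ↦ dist_nonneg) ?_
    (by simpa only [mul_zero] using Tendsto.const_mul K hg)
  filter_upwards [mem_inf_of_right (mem_principal_self _)] with E hE
  rw [Finset.mul_sum]
  exact Finset.sum_le_sum fun i hi ↦ hfg _ (hE.1 i hi).1 _ (hE.1 i hi).2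

lemma absolutelyContinuousOnInterval_prodMk (hf : AbsolutelyContinuousOnInterval f a b)
    (hg : AbsolutelyContinuousOnInterval g a b) :
    AbsolutelyContinuousOnInterval (fun t ↦ (f t, g t)) a b := by
  refine squeeze_zero (fun E ↦ Finset.sum_nonneg fun _ _ ↦ dist_nonneg) (fun E ↦ ?_)
    (by simpa only [add_zero] using Tendsto.add hf hg)
  rw [← Finset.sum_add_distrib]
  exact Finset.sum_le_sum fun _ _ ↦ max_le_add_of_nonneg dist_nonneg dist_nonneg

lemma absolutelyContinuousOnInterval_comp_of_locallyLipschitz {E : Type*}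
    [SeminormedAddCommGroup E] {w : E → X} {y : ℝ → E} (hw : LocallyLipschitz w)
    (hy : AbsolutelyContinuousOnInterval y a b) :
    AbsolutelyContinuousOnInterval (w ∘ y) a b := by
  have himage : IsCompact (y '' uIcc a b) := isCompact_uIcc.image_of_continuousOn hy.continuousOn
  obtain ⟨K, hK⟩ := hw.locallyLipschitzOn.exists_lipschitzOnWith_of_compact himage
  exact absolutelyContinuousOnInterval_of_dist_le_mul hy fun s hs t ht ↦
    hK.dist_le_mul _ (mem_image_of_mem y hs) _ (mem_image_of_mem y ht)

end AbsolutelyContinuous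

section Calculus

variable {E : Type*} [NormedAddCommGroup E] [NormedSpace ℝ E] {a b : ℝ} {y y' : ℝ → E}

lemma absolutelyContinuousOnInterval_of_eq_add_integral {c : E}
    (hy' : IntervalIntegrable y' volume a b)
    (hy : ∀ t ∈ uIcc a b, y t = c + ∫ s in a..t, y' s) :
    AbsolutelyContinuousOnInterval y a b := by
  have hsub {s t : ℝ} (hs : s ∈ uIcc a b) (ht : t ∈ uIcc a b) :
      IntervalIntegrable y' volume s t := hy'.mono_set (uIcc_subset_uIcc hs ht)
  refine absolutelyContinuousOnInterval_of_dist_le_mul (K := 1)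
    (hy'.norm.absolutelyContinuousOnInterval_intervalIntegral left_mem_uIcc)
    fun s hs t ht ↦ ?_
  have has := hsub left_mem_uIcc hs
  have hat := hsub left_mem_uIcc ht
  rw [one_mul, dist_eq_norm, Real.dist_eq, hy s hs, hy t ht, add_sub_add_left_eq_sub,
    intervalIntegral.integral_interval_sub_left has hat,
    intervalIntegral.integral_interval_sub_left has.norm hat.norm]
  exact intervalIntegral.norm_integral_le_abs_integral_norm

lemma ae_hasDerivAt_of_eq_add_integral [CompleteSpace E] {c : E}
    (hy' : IntervalIntegrable y' volume a b)
    (hy : ∀ t ∈ uIcc a b, y t = c + ∫ s in a..t, y' s) :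
    ∀ᵐ t, t ∈ uIcc a b → HasDerivAt y (y' t) t := by
  filter_upwards [hy'.ae_hasDerivAt_integral, Measure.ae_ne volume a, Measure.ae_ne volume b]
    with t hderiv hta htb ht
  have hnhds : uIcc a b ∈ nhds t := Icc_mem_nhds (by grind [uIcc]) (by grind [uIcc])
  exact ((hderiv ht a left_mem_uIcc).const_add c).congr_of_eventuallyEq
    (Filter.eventually_of_mem hnhds hy)

lemma integral_fderiv_apply_eq_sub {w : E → ℝ} (hw : ContDiff ℝ 1 w)
    (hy : AbsolutelyContinuousOnInterval y a b)
    (hderiv : ∀ᵐ t, t ∈ uIcc a b → HasDerivAt y (y' t) t) :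
    ∫ t in a..b, fderiv ℝ w (y t) (y' t) = w (y b) - w (y a) := by
  have hchain : ∀ᵐ t, t ∈ uIoc a b → fderiv ℝ w (y t) (y' t) = deriv (w ∘ y) t := by
    filter_upwards [hderiv] with t ht htab
    exact ((hw.differentiable one_ne_zero (y t)).hasFDerivAt.comp_hasDerivAt t
      (ht (uIoc_subset_uIcc htab))).deriv.symm
  rw [intervalIntegral.integral_congr_ae hchain]
  exact (absolutelyContinuousOnInterval_comp_of_locallyLipschitz
    hw.locallyLipschitz hy).integral_deriv_eq_sub

end Calculus

section Graph

variable {α β G : Type*} [MeasurableSpace α] [MeasurableSpace β] [MeasurableEq β]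
  [NormedAddCommGroup G] [NormedSpace ℝ G]

lemma measurableEmbedding_graph {φ : α → β} (hφ : Measurable φ) :
    MeasurableEmbedding fun t ↦ (t, φ t) := by
  have hrange : range (fun t ↦ (t, φ t)) = {p : α × β | φ p.1 = p.2} := by
    ext ⟨t, y⟩
    simp only [mem_range, Prod.mk.injEq, exists_eq_left, mem_ofPred_eq]
  refine .of_measurable_inverse (measurable_id.prodMk hφ) ?_ measurable_fst fun _ ↦ rfl
  rw [hrange]
  exact measurableSet_eq_fun (hφ.comp measurable_fst) measurable_snd

lemma integral_map_graph {μ : Measure α} {φ : α → β} (hφ : AEMeasurable φ μ) (h : α × β → G) :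
    ∫ z, h z ∂μ.map (fun t ↦ (t, φ t)) = ∫ t, h (t, φ t) ∂μ := by
  have hgraph : (fun t ↦ (t, φ t)) =ᵐ[μ] fun t ↦ (t, hφ.mk φ t) :=
    hφ.ae_eq_mk.mono fun t ht ↦ congrArg (Prod.mk t) ht
  rw [Measure.map_congr hgraph, (measurableEmbedding_graph hφ.measurable_mk).integral_map]
  exact integral_congr_ae (hgraph.symm.fun_comp h)

end Graph

section Liouville

variable {n m : ℕ}

lemma LFop_eq_fderiv_apply (f : ℝ × (Fin n → ℝ) → Fin n → ℝ)
    (g : ℝ × (Fin n → ℝ) → Fin n → Fin m → ℝ) (v : ℝ × (Fin n → ℝ) → ℝ)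
    (z : ℝ × (Fin n → ℝ) × (Fin m → ℝ)) :
    LFop f g v z = fderiv ℝ v (z.1, z.2.1) (1, Fvec f g z) := by
  set L := fderiv ℝ v (z.1, z.2.1)
  have hspace : L (0, Fvec f g z) = ∑ k, L (0, Pi.single k 1) * Fvec f g z k := by
    have hsum := congrArg (L ∘L .inr ℝ ℝ _) (pi_eq_sum_univ' (Fvec f g z))
    simpa only [map_sum, map_smul, smul_eq_mul, ContinuousLinearMap.comp_apply,
      ContinuousLinearMap.inr_apply, mul_comm] using hsum
  calc LFop f g v z = L (1, 0) + L (0, Fvec f g z) := by rw [hspace, LFop]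
    _ = L (1, Fvec f g z) := by rw [← map_add, Prod.mk_add_mk, add_zero, zero_add]

theorem occupation_satisfies_liouville_general {T : ℝ} (hT : 0 ≤ T) {x₀ : Fin n → ℝ}
    {f : ℝ × (Fin n → ℝ) → Fin n → ℝ} {g : ℝ × (Fin n → ℝ) → Fin n → Fin m → ℝ}
    {x : ℝ → Fin n → ℝ} {u : ℝ → Fin m → ℝ}
    (hu : AEMeasurable u (volume.restrict (Icc 0 T)))
    (hint : IntegrableOn (fun s ↦ Fvec f g (s, x s, u s)) (Icc 0 T))
    (hx : ∀ t ∈ Icc 0 T, x t = x₀ + ∫ s in Icc 0 t, Fvec f g (s, x s, u s))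
    {v : ℝ × (Fin n → ℝ) → ℝ} (hv : ContDiff ℝ 1 v) :
    v (0, x₀) + ∫ z, LFop f g v z ∂(occupationMeasure T x u) =
      ∫ y, v (T, y) ∂(Measure.dirac (x T)) := by
  set x' : ℝ → Fin n → ℝ := fun s ↦ Fvec f g (s, x s, u s)
  have hx' : IntervalIntegrable x' volume 0 T :=
    (intervalIntegrable_iff_integrableOn_Icc_of_le hT).mpr hint
  have hprim : ∀ t ∈ uIcc 0 T, x t = x₀ + ∫ s in (0 : ℝ)..t, x' s := fun t ht ↦ by
    rw [uIcc_of_le hT] at ht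
    rw [hx t ht, intervalIntegral.integral_of_le ht.1, integral_Icc_eq_integral_Ioc]
  have hx0 : x 0 = x₀ := by simpa using hprim 0 left_mem_uIcc
  have hac : AbsolutelyContinuousOnInterval x 0 T :=
    absolutelyContinuousOnInterval_of_eq_add_integral hx' hprim
  have hxu : AEMeasurable (fun t ↦ (x t, u t)) (volume.restrict (Icc 0 T)) :=
    ((uIcc_of_le hT ▸ hac.continuousOn).aemeasurable measurableSet_Icc).prodMk hu
  have hcurve : ∀ᵐ t, t ∈ uIcc 0 T → HasDerivAt (fun s ↦ (s, x s)) (1, x' t) t :=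
    (ae_hasDerivAt_of_eq_add_integral hx' hprim).mono fun t ht htT ↦
      (hasDerivAt_id t).prodMk (ht htT)
  have hFTC : ∫ z, LFop f g v z ∂(occupationMeasure T x u) = v (T, x T) - v (0, x 0) := by
    simp only [occupationMeasure, integral_map_graph hxu, LFop_eq_fderiv_apply]
    rw [integral_Icc_eq_integral_Ioc, ← intervalIntegral.integral_of_le hT]
    exact integral_fderiv_apply_eq_sub hv (absolutelyContinuousOnInterval_prodMk
      LipschitzWith.id.lipschitzOnWith.absolutelyContinuousOnInterval hac) hcurve
  rw [hFTC, hx0, integral_dirac, add_sub_cancel]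

end Liouville

/-- the occupation measure and terminal measure of an admissible pair satisfy
Liouville's equation: for every `v ∈ C¹`,
`v(0,x₀) + ∫ L_F v dμ(·|x,u) = v(T, x(T)) = ∫ v(T,·) dδ_{x(T)}`. -/
theorem occupation_satisfies_liouville
    {n m : ℕ} (hn : 0 < n) (hm : 0 < m) (T : ℝ) (hT : 0 < T)
    (X XT : Set (Fin n → ℝ)) (hX : IsCompact X) (hXT : IsCompact XT) (hXTsub : XT ⊆ X)
    (x₀ : Fin n → ℝ) (hx₀ : x₀ ∈ X)
    (f : ℝ × (Fin n → ℝ) → Fin n → ℝ) (g : ℝ × (Fin n → ℝ) → Fin n → Fin m → ℝ)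
    (hf : ContinuousOn f (Set.Icc (0 : ℝ) T ×ˢ Set.univ))
    (hg : ContinuousOn g (Set.Icc (0 : ℝ) T ×ˢ Set.univ))
    (x : ℝ → Fin n → ℝ) (u : ℝ → Fin m → ℝ)
    (hadm : IsAdmissiblePair T X XT x₀ f g x u) :
    ∀ v : ℝ × (Fin n → ℝ) → ℝ, ContDiff ℝ 1 v →
      v (0, x₀) + ∫ z, LFop f g v z ∂(occupationMeasure T x u) =
        ∫ y, v (T, y) ∂(Measure.dirac (x T)) := by
  obtain ⟨hu, -, -, -, -, hint, hx⟩ := hadm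
  exact fun v hv ↦ occupation_satisfies_liouville_general hT.le hu.aemeasurable hint hx hv

end
end

section
/- Weak duality between (P) and (D): if Γ = (μ, μ_T, γ, σ₊, σ₋, σ̂) is feasible for (P) and (v,w,p,q) is feasible for (D), then v(0,x₀) ≤ ⟨μ,h⟩ + ⟨μ_T,H⟩. Consequently the optimal value of (D) is at most the optimal value of (P). -/
open MeasureTheory Set

noncomputable section

/-- `(L_f v)(t,x) = ∂v/∂t + Σ_k (∂v/∂x_k)·[f(t,x)]_k`. -/
def Lfop {n : ℕ} (f : ℝ × (Fin n → ℝ) → Fin n → ℝ)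
    (v : ℝ × (Fin n → ℝ) → ℝ) (z : ℝ × (Fin n → ℝ)) : ℝ :=
  fderiv ℝ v z ((1 : ℝ), (0 : Fin n → ℝ)) +
    ∑ k, fderiv ℝ v z ((0 : ℝ), Pi.single k (1 : ℝ)) * f z k

/-- `[L_g v]_j(t,x) = Σ_k (∂v/∂x_k)·g_{kj}(t,x)`. -/
def Lgop {n m : ℕ} (g : ℝ × (Fin n → ℝ) → Fin n → Fin m → ℝ)
    (v : ℝ × (Fin n → ℝ) → ℝ) (j : Fin m) (z : ℝ × (Fin n → ℝ)) : ℝ :=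
  ∑ k, fderiv ℝ v z ((0 : ℝ), Pi.single k (1 : ℝ)) * g z k j

/-- Liouville's equation for a pair of measures `(μ, μT)` with initial point `x₀`. -/
def SatisfiesLiouville {n m : ℕ} (T : ℝ) (x₀ : Fin n → ℝ)
    (f : ℝ × (Fin n → ℝ) → Fin n → ℝ) (g : ℝ × (Fin n → ℝ) → Fin n → Fin m → ℝ)
    (μ : Measure (ℝ × (Fin n → ℝ) × (Fin m → ℝ))) (μT : Measure (Fin n → ℝ)) : Prop :=
  ∀ v : ℝ × (Fin n → ℝ) → ℝ, ContDiff ℝ 1 v →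
    v (0, x₀) + ∫ z, LFop f g v z ∂μ = ∫ y, v (T, y) ∂μT

/-- Feasibility for the primal problem `(P)`. -/
def PFeasible {n m : ℕ} (T : ℝ) (X XT : Set (Fin n → ℝ)) (x₀ : Fin n → ℝ)
    (f : ℝ × (Fin n → ℝ) → Fin n → ℝ) (g : ℝ × (Fin n → ℝ) → Fin n → Fin m → ℝ)
    (μ : Measure (ℝ × (Fin n → ℝ) × (Fin m → ℝ))) (μT : Measure (Fin n → ℝ))
    (γ : Measure (ℝ × (Fin n → ℝ))) (σp σm σh : Fin m → Measure (ℝ × (Fin n → ℝ))) : Prop :=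
  IsFiniteMeasure μ ∧ IsFiniteMeasure μT ∧ IsFiniteMeasure γ ∧
  (∀ j, IsFiniteMeasure (σp j) ∧ IsFiniteMeasure (σm j) ∧ IsFiniteMeasure (σh j)) ∧
  μ ((Set.Icc (0 : ℝ) T ×ˢ X ×ˢ Ubox m)ᶜ) = 0 ∧ μT (XTᶜ) = 0 ∧
  γ ((Set.Icc (0 : ℝ) T ×ˢ X)ᶜ) = 0 ∧
  (∀ j, σp j ((Set.Icc (0 : ℝ) T ×ˢ X)ᶜ) = 0 ∧ σm j ((Set.Icc (0 : ℝ) T ×ˢ X)ᶜ) = 0 ∧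
    σh j ((Set.Icc (0 : ℝ) T ×ˢ X)ᶜ) = 0) ∧
  -- (a) Liouville's equation
  SatisfiesLiouville T x₀ f g μ μT ∧
  -- (b) ∫ L_F v dμ = ∫ L_f v dγ + Σ_j ∫ [L_g v]_j d([σ₊]_j − [σ₋]_j)
  (∀ v : ℝ × (Fin n → ℝ) → ℝ, ContDiff ℝ 1 v →
    ∫ z, LFop f g v z ∂μ =
      ∫ z, Lfop f v z ∂γ +
        ∑ j, (∫ z, Lgop g v j z ∂(σp j) - ∫ z, Lgop g v j z ∂(σm j))) ∧
  -- (c) [σ₊]_j + [σ₋]_j + [σ̂]_j = γ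
  (∀ j, σp j + σm j + σh j = γ) ∧
  -- (d) γ is the (t,x)-marginal of μ
  γ = μ.map (fun z => (z.1, z.2.1))

/-- Feasibility for the dual problem `(D)`. -/
def DFeasible {n m : ℕ} (T : ℝ) (X XT : Set (Fin n → ℝ))
    (f : ℝ × (Fin n → ℝ) → Fin n → ℝ) (g : ℝ × (Fin n → ℝ) → Fin n → Fin m → ℝ)
    (h : ℝ × (Fin n → ℝ) × (Fin m → ℝ) → ℝ) (H : (Fin n → ℝ) → ℝ)
    (v w : ℝ × (Fin n → ℝ) → ℝ) (p : Fin m → ℝ × (Fin n → ℝ) → ℝ)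
    (q : ℝ × (Fin n → ℝ) → ℝ) : Prop :=
  ContDiff ℝ 1 v ∧ ContDiff ℝ 1 w ∧ (∀ j, Continuous (p j)) ∧ Continuous q ∧
  (∀ z ∈ Set.Icc (0 : ℝ) T ×ˢ X ×ˢ Ubox m,
    0 ≤ LFop f g v z + LFop f g w z + q (z.1, z.2.1) + h z) ∧
  (∀ x ∈ XT, v (T, x) ≤ H x) ∧
  (∀ z ∈ Set.Icc (0 : ℝ) T ×ˢ X, Lfop f w z + ∑ j, p j z + q z ≤ 0) ∧
  (∀ j, ∀ z ∈ Set.Icc (0 : ℝ) T ×ˢ X, |Lgop g w j z| ≤ p j z) ∧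
  (∀ j, ∀ z ∈ Set.Icc (0 : ℝ) T ×ˢ X, 0 ≤ p j z)

/-!
On `U = [-1,1]^m` one has `L_F w = L_f w + ∑ j, [L_g w]_j u_j ≤ L_f w + ∑ j, |[L_g w]_j|`, so the
constraints of `(D)` on `(w, p, q)` force `L_F w + q ≤ 0` pointwise. Hence `L_F v + h ≥ 0`: the
first component of a feasible point of `(D)` is a subsolution of the Hamilton–Jacobi–Bellman
equation. Integrating `L_F v + h ≥ 0` against `μ` and `v(T, ·) ≤ H` against `μ_T` turns Liouville's
equation for `v` into the bound.
-/

/-- `v` is a classical subsolution, on `[0,T] × X` with inputs in `U`, of the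
Hamilton–Jacobi–Bellman equation `min_{u ∈ U} (L_F v + h) = 0` with terminal condition
`v(T, ·) = H` on `XT`. Such `v` are the feasible points of the linear program dual to minimizing
`∫ h dμ + ∫ H dμT` over the solutions `(μ, μT)` of Liouville's equation. Regularity is required on
the whole of `ℝ × ℝⁿ`, as for the test functions in `SatisfiesLiouville`. -/
structure IsHJBSubsolution {n m : ℕ} (T : ℝ) (X XT : Set (Fin n → ℝ)) (U : Set (Fin m → ℝ))
    (f : ℝ × (Fin n → ℝ) → Fin n → ℝ) (g : ℝ × (Fin n → ℝ) → Fin n → Fin m → ℝ)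
    (h : ℝ × (Fin n → ℝ) × (Fin m → ℝ) → ℝ) (H : (Fin n → ℝ) → ℝ)
    (v : ℝ × (Fin n → ℝ) → ℝ) : Prop where
  contDiff : ContDiff ℝ 1 v
  nonneg_LFop_add : ∀ z ∈ Set.Icc (0 : ℝ) T ×ˢ X ×ˢ U, 0 ≤ LFop f g v z + h z
  terminal_le : ∀ x ∈ XT, v (T, x) ≤ H x

theorem integrable_of_continuousOn_of_ae_mem_isCompact {E F : Type*} [TopologicalSpace E]
    [R1Space E] [MeasurableSpace E] [OpensMeasurableSpace E] [NormedAddCommGroup F]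
    {ν : Measure E} [IsFiniteMeasureOnCompacts ν] {K : Set E} {φ : E → F}
    (hK : IsCompact K) (hKm : MeasurableSet K) (hφ : ContinuousOn φ K) (hν : ∀ᵐ x ∂ν, x ∈ K) :
    Integrable φ ν := by
  rw [← Measure.restrict_eq_self_of_ae_mem hν]
  exact hφ.integrableOn_compact' hK hKm

section

variable {n m : ℕ} {T : ℝ} {X XT : Set (Fin n → ℝ)} {U : Set (Fin m → ℝ)} {x₀ : Fin n → ℝ}
  {f : ℝ × (Fin n → ℝ) → Fin n → ℝ} {g : ℝ × (Fin n → ℝ) → Fin n → Fin m → ℝ}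
  {h : ℝ × (Fin n → ℝ) × (Fin m → ℝ) → ℝ} {H : (Fin n → ℝ) → ℝ}
  {μ : Measure (ℝ × (Fin n → ℝ) × (Fin m → ℝ))} {μT : Measure (Fin n → ℝ)}
  {v w : ℝ × (Fin n → ℝ) → ℝ} {p : Fin m → ℝ × (Fin n → ℝ) → ℝ} {q : ℝ × (Fin n → ℝ) → ℝ}

variable (f g v) in
theorem LFop_eq_Lfop_add_sum_Lgop_mul (z : ℝ × (Fin n → ℝ) × (Fin m → ℝ)) :
    LFop f g v z = Lfop f v (z.1, z.2.1) + ∑ j, Lgop g v j (z.1, z.2.1) * z.2.2 j := by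
  simp only [LFop, Lfop, Lgop, Fvec, mul_add, Finset.sum_add_distrib, Finset.mul_sum,
    Finset.sum_mul, add_assoc, mul_assoc]
  rw [Finset.sum_comm]

variable (f g v) in
theorem LFop_le_Lfop_add_sum_abs_Lgop {z : ℝ × (Fin n → ℝ) × (Fin m → ℝ)} (hz : z.2.2 ∈ Ubox m) :
    LFop f g v z ≤ Lfop f v (z.1, z.2.1) + ∑ j, |Lgop g v j (z.1, z.2.1)| := by
  rw [LFop_eq_Lfop_add_sum_Lgop_mul]
  gcongr with j
  have hu : |z.2.2 j| ≤ 1 := abs_le.2 ⟨hz.1 j, hz.2 j⟩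
  calc Lgop g v j (z.1, z.2.1) * z.2.2 j
      ≤ |Lgop g v j (z.1, z.2.1)| * |z.2.2 j| := (le_abs_self _).trans_eq (abs_mul _ _)
    _ ≤ |Lgop g v j (z.1, z.2.1)| := mul_le_of_le_one_right (abs_nonneg _) hu

theorem continuousOn_LFop {S : Set (ℝ × (Fin n → ℝ))} (hf : ContinuousOn f S)
    (hg : ContinuousOn g S) (hv : ContDiff ℝ 1 v) :
    ContinuousOn (LFop f g v) {z | (z.1, z.2.1) ∈ S} := by
  have hproj : Continuous fun z : ℝ × (Fin n → ℝ) × (Fin m → ℝ) => (z.1, z.2.1) := by fun_prop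
  have hdv : ∀ e, Continuous fun z : ℝ × (Fin n → ℝ) × (Fin m → ℝ) =>
      fderiv ℝ v (z.1, z.2.1) e := fun e =>
    ((hv.continuous_fderiv one_ne_zero).comp hproj).clm_apply continuous_const
  have hF : ContinuousOn (Fvec f g) {z | (z.1, z.2.1) ∈ S} := by
    have hf' := hf.comp hproj.continuousOn (mapsTo_preimage _ S)
    have hg' := hg.comp hproj.continuousOn (mapsTo_preimage _ S)
    refine continuousOn_pi.2 fun k => (continuousOn_pi.1 hf' k).add ?_
    refine continuousOn_finsetSum _ fun j _ => ?_
    exact (continuousOn_pi.1 (continuousOn_pi.1 hg' k) j).mul (by fun_prop)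
  refine (hdv _).continuousOn.add (continuousOn_finsetSum _ fun k _ => ?_)
  exact (hdv _).continuousOn.mul (continuousOn_pi.1 hF k)

theorem DFeasible.isHJBSubsolution (hD : DFeasible T X XT f g h H v w p q) :
    IsHJBSubsolution T X XT (Ubox m) f g h H v := by
  obtain ⟨hv, -, -, -, h_running, h_terminal, h_drift, h_input, -⟩ := hD
  refine ⟨hv, fun z hz => ?_, h_terminal⟩
  have hz' : (z.1, z.2.1) ∈ Set.Icc (0 : ℝ) T ×ˢ X := ⟨hz.1, hz.2.1⟩
  have hw : LFop f g w z ≤ -q (z.1, z.2.1) :=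
    calc LFop f g w z
        ≤ Lfop f w (z.1, z.2.1) + ∑ j, |Lgop g w j (z.1, z.2.1)| :=
          LFop_le_Lfop_add_sum_abs_Lgop f g w hz.2.2
      _ ≤ Lfop f w (z.1, z.2.1) + ∑ j, p j (z.1, z.2.1) := by
          gcongr with j
          exact h_input j _ hz'
      _ ≤ -q (z.1, z.2.1) := by linarith [h_drift _ hz']
  linarith [h_running z hz]

theorem SatisfiesLiouville.le_integral_add_integral
    (hL : SatisfiesLiouville T x₀ f g μ μT) (hv : ContDiff ℝ 1 v)
    (hLv_int : Integrable (LFop f g v) μ) (hh_int : Integrable h μ)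
    (hvT_int : Integrable (fun y => v (T, y)) μT) (hH_int : Integrable H μT)
    (h_running : ∀ᵐ z ∂μ, 0 ≤ LFop f g v z + h z) (h_terminal : ∀ᵐ y ∂μT, v (T, y) ≤ H y) :
    v (0, x₀) ≤ ∫ z, h z ∂μ + ∫ y, H y ∂μT := by
  have hμ : 0 ≤ ∫ z, LFop f g v z ∂μ + ∫ z, h z ∂μ := by
    rw [← integral_add hLv_int hh_int]
    exact integral_nonneg_of_ae h_running
  have hμT : ∫ y, v (T, y) ∂μT ≤ ∫ y, H y ∂μT := integral_mono_ae hvT_int hH_int h_terminal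
  linarith [hL v hv]

theorem weak_duality_general [IsFiniteMeasure μ] [IsFiniteMeasure μT]
    (hX : IsCompact X) (hXT : IsCompact XT) (hU : IsCompact U)
    (hf : ContinuousOn f (Set.Icc (0 : ℝ) T ×ˢ X)) (hg : ContinuousOn g (Set.Icc (0 : ℝ) T ×ˢ X))
    (hh : ContinuousOn h (Set.Icc (0 : ℝ) T ×ˢ X ×ˢ U)) (hH : ContinuousOn H XT)
    (hμ : ∀ᵐ z ∂μ, z ∈ Set.Icc (0 : ℝ) T ×ˢ X ×ˢ U) (hμT : ∀ᵐ y ∂μT, y ∈ XT)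
    (hL : SatisfiesLiouville T x₀ f g μ μT) (hv : IsHJBSubsolution T X XT U f g h H v) :
    v (0, x₀) ≤ ∫ z, h z ∂μ + ∫ y, H y ∂μT := by
  have hK : IsCompact (Set.Icc (0 : ℝ) T ×ˢ X ×ˢ U) := isCompact_Icc.prod (hX.prod hU)
  have integrable_μ {φ : ℝ × (Fin n → ℝ) × (Fin m → ℝ) → ℝ}
      (hφ : ContinuousOn φ (Set.Icc (0 : ℝ) T ×ˢ X ×ˢ U)) : Integrable φ μ :=
    integrable_of_continuousOn_of_ae_mem_isCompact hK hK.measurableSet hφ hμ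
  have integrable_μT {φ : (Fin n → ℝ) → ℝ} (hφ : ContinuousOn φ XT) : Integrable φ μT :=
    integrable_of_continuousOn_of_ae_mem_isCompact hXT hXT.measurableSet hφ hμT
  have hLv : ContinuousOn (LFop f g v) (Set.Icc (0 : ℝ) T ×ˢ X ×ˢ U) :=
    (continuousOn_LFop hf hg hv.contDiff).mono fun _ hz => ⟨hz.1, hz.2.1⟩
  have hvT : Continuous fun y => v (T, y) := hv.contDiff.continuous.comp (by fun_prop)
  exact hL.le_integral_add_integral hv.contDiff (integrable_μ hLv) (integrable_μ hh)
    (integrable_μT hvT.continuousOn) (integrable_μT hH) (hμ.mono hv.nonneg_LFop_add)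
    (hμT.mono hv.terminal_le)

end

/-- weak duality between `(P)` and `(D)`: if `Γ` is feasible for `(P)` and
`(v,w,p,q)` is feasible for `(D)`, then `v(0,x₀) ≤ ⟨μ,h⟩ + ⟨μ_T,H⟩`. -/
theorem weak_duality
    {n m : ℕ} (hn : 0 < n) (hm : 0 < m) (T : ℝ) (hT : 0 < T)
    (X XT : Set (Fin n → ℝ)) (hX : IsCompact X) (hXT : IsCompact XT) (hXTsub : XT ⊆ X)
    (x₀ : Fin n → ℝ) (hx₀ : x₀ ∈ X)
    (f : ℝ × (Fin n → ℝ) → Fin n → ℝ) (g : ℝ × (Fin n → ℝ) → Fin n → Fin m → ℝ)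
    (hf : ContinuousOn f (Set.Icc (0 : ℝ) T ×ˢ Set.univ))
    (hg : ContinuousOn g (Set.Icc (0 : ℝ) T ×ˢ Set.univ))
    (h : ℝ × (Fin n → ℝ) × (Fin m → ℝ) → ℝ) (H : (Fin n → ℝ) → ℝ)
    (hh : Continuous h) (hH : Continuous H)
    (μ : Measure (ℝ × (Fin n → ℝ) × (Fin m → ℝ))) (μT : Measure (Fin n → ℝ))
    (γ : Measure (ℝ × (Fin n → ℝ))) (σp σm σh : Fin m → Measure (ℝ × (Fin n → ℝ)))
    (hP : PFeasible T X XT x₀ f g μ μT γ σp σm σh)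
    (v w : ℝ × (Fin n → ℝ) → ℝ) (p : Fin m → ℝ × (Fin n → ℝ) → ℝ)
    (q : ℝ × (Fin n → ℝ) → ℝ)
    (hD : DFeasible T X XT f g h H v w p q) :
    v (0, x₀) ≤ ∫ z, h z ∂μ + ∫ y, H y ∂μT := by
  obtain ⟨hμ, hμT, -, -, hμ_supp, hμT_supp, -, -, hL, -⟩ := hP
  have hsub : Set.Icc (0 : ℝ) T ×ˢ X ⊆ Set.Icc (0 : ℝ) T ×ˢ Set.univ :=
    Set.prod_mono_right (subset_univ X)
  exact weak_duality_general hX hXT isCompact_Icc (hf.mono hsub) (hg.mono hsub) hh.continuousOn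
    hH.continuousOn (mem_ae_iff.2 hμ_supp) (mem_ae_iff.2 hμT_supp) hL hD.isHJBSubsolution

end
end

section
/- Strong duality between (P) and (D): if (P) is feasible, then there is no duality gap, i.e. the infimum of (P) equals the supremum of (D). -/
open MeasureTheory Set

noncomputable section

/-!
The controls in `(P)` can be integrated out and put back: given an occupation measure `μ`, the
constraints (b)–(d) are met by the marginals of `μ` weighted by `u_j⁺`, `u_j⁻` and `1 - |u_j|`, so
`(P)` has the costs of the classical occupation-measure program. Dually, `w`, `p` and `q` gain
nothing, because `L_F w + q ≤ L_f w + ∑ p_j + q ≤ 0` on the control box; `(D)` has the values of the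
smooth Hamilton–Jacobi–Bellman subsolutions.

For the classical pair, write the dual as `v(0, x₀) → sup` subject to `A v ≤ (h, H)` in
`C(K) × C(XT)`, where `A v = (-L_F v, v(T, ·))`. Feasibility of `(P)` makes the supremum finite, by
weak duality. Test functions affine in `t` make the range of `A` cofinal, so the M. Riesz extension
theorem yields a positive functional `Λ` with `Λ (A v) = v(0, x₀)` and `Λ (h, H) = sup (D)`. By the
Riesz–Markov theorem `Λ` is a pair of measures, and `Λ (A v) = v(0, x₀)` is Liouville's equation:
this pair is optimal in the primal program.
-/

section ConicDuality

variable {V E : Type*} [AddCommGroup V] [Module ℝ V] [AddCommGroup E] [PartialOrder E]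
  [IsOrderedAddMonoid E] [Module ℝ E] [PosSMulMono ℝ E]

lemma exists_positiveLinearMap_comp_eq (A : V →ₗ[ℝ] E) (l : V →ₗ[ℝ] ℝ)
    (hcof : ∀ e, ∃ v, e ≤ A v) (hpos : ∀ v, 0 ≤ A v → 0 ≤ l v) :
    ∃ Λ : E →ₚ[ℝ] ℝ, ∀ v, Λ (A v) = l v := by
  obtain ⟨φ, rfl⟩ : l ∈ A.dualMap.range := by
    rw [LinearMap.range_dualMap_eq_dualAnnihilator_ker, Submodule.mem_dualAnnihilator]
    intro v hv
    rw [LinearMap.mem_ker] at hv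
    have h₁ := hpos v hv.ge
    have h₂ := hpos (-v) (by simp [hv])
    rw [map_neg] at h₂
    linarith
  obtain ⟨Λ, hΛ, hΛ_nonneg⟩ := riesz_extension (PointedCone.positive ℝ E)
    ⟨A.range, φ.domRestrict A.range⟩
    (by rintro ⟨-, v, rfl⟩ hv; exact hpos v hv)
    (fun e ↦ by
      obtain ⟨v, hv⟩ := hcof (-e)
      exact ⟨⟨A v, v, rfl⟩, neg_le_iff_add_nonneg.mp hv⟩)
  exact ⟨.mk₀ Λ hΛ_nonneg, fun v ↦ hΛ ⟨A v, v, rfl⟩⟩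

/- Homogenizing, `A v ≤ r • c` must force `l v ≤ r * d`, also for `r ≤ 0`: adding a large multiple
`s` of a nearly optimal feasible `v₀` makes the coefficient `s + r` of `c` positive. -/
lemma map_le_mul_of_isLUB {A : V →ₗ[ℝ] E} {l : V →ₗ[ℝ] ℝ} {c : E} {d : ℝ}
    (hd : IsLUB (l '' {v | A v ≤ c}) d) {v : V} {r : ℝ} (hv : A v ≤ r • c) : l v ≤ r * d := by
  refine le_of_forall_pos_lt_add fun ε hε ↦ ?_
  obtain ⟨s, hs, hsr⟩ : ∃ s, 0 < s ∧ 0 < s + r :=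
    ⟨|r| + 1, by positivity, by linarith [neg_abs_le r]⟩
  obtain ⟨-, ⟨v₀, hv₀ : A v₀ ≤ c, rfl⟩, hlt, -⟩ :=
    hd.exists_between (sub_lt_self d (div_pos hε hs))
  have hfeas : A ((s + r)⁻¹ • (v + s • v₀)) ≤ c := by
    rw [map_smul, inv_smul_le_iff_of_pos hsr, map_add, map_smul, add_comm s r, add_smul]
    exact add_le_add hv (smul_le_smul_of_nonneg_left hv₀ hs.le)
  have hle : l v + s * l v₀ ≤ (s + r) * d := by
    have := hd.1 ⟨_, hfeas, rfl⟩
    rwa [map_smul, smul_eq_mul, inv_mul_le_iff₀ hsr, map_add, map_smul, smul_eq_mul] at this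
  have hgap : s * (d - l v₀) < ε := by
    rw [mul_comm, ← lt_div_iff₀ hs]
    linarith
  linarith

lemma exists_positiveLinearMap_isLUB (A : V →ₗ[ℝ] E) (l : V →ₗ[ℝ] ℝ) (c : E)
    (hcof : ∀ e, ∃ v, e ≤ A v) (hbdd : BddAbove (l '' {v | A v ≤ c})) :
    ∃ Λ : E →ₚ[ℝ] ℝ, (∀ v, Λ (A v) = l v) ∧ IsLUB (l '' {v | A v ≤ c}) (Λ c) := by
  have hne : (l '' {v | A v ≤ c}).Nonempty := by
    obtain ⟨v, hv⟩ := hcof (-c)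
    exact ⟨_, -v, by simpa using neg_le_neg hv, rfl⟩
  obtain ⟨d, hd⟩ := Real.exists_isLUB hne hbdd
  obtain ⟨Λ, hΛ⟩ := exists_positiveLinearMap_comp_eq
    ((-A).coprod (LinearMap.toSpanSingleton ℝ E c))
    ((-l).coprod (LinearMap.toSpanSingleton ℝ ℝ d))
    (fun e ↦ by
      obtain ⟨v, hv⟩ := hcof e
      exact ⟨(-v, 0), by simpa using hv⟩)
    (by
      rintro ⟨v, r⟩ hv
      simpa using map_le_mul_of_isLUB hd (v := v) (r := r) (by simpa using hv))
  have hΛA (v : V) : Λ (A v) = l v := by simpa using hΛ (-v, 0)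
  have hΛc : Λ c = d := by simpa using hΛ (0, 1)
  exact ⟨Λ, hΛA, hΛc ▸ hd⟩

end ConicDuality

section CompactSupport

variable {E : Type*} [TopologicalSpace E] [T2Space E] [MeasurableSpace E] [BorelSpace E]
  {K : Set E}

lemma integrable_of_continuousOn_of_measure_compl (hK : IsCompact K) {μ : Measure E}
    [IsFiniteMeasure μ] (hμ : μ Kᶜ = 0) {φ : E → ℝ} (hφ : ContinuousOn φ K) :
    Integrable φ μ := by
  rw [← Measure.restrict_eq_self_of_ae_mem (mem_ae_iff.mpr hμ)]
  exact hφ.integrableOn_of_subset_isCompact hK hK.measurableSet subset_rfl (measure_ne_top _ _)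

lemma exists_measure_integral_eq (hK : IsCompact K) (Λ : C(K, ℝ) →ₚ[ℝ] ℝ) :
    ∃ μ : Measure E, IsFiniteMeasure μ ∧ μ Kᶜ = 0 ∧
      ∀ (φ : E → ℝ) (hφ : ContinuousOn φ K), ∫ z, φ z ∂μ = Λ ⟨K.domRestrict φ, hφ.domRestrict⟩ := by
  have : CompactSpace K := isCompact_iff_compactSpace.mp hK
  let Λc : CompactlySupportedContinuousMap K ℝ →ₚ[ℝ] ℝ :=
    { toFun φ := Λ φ.toContinuousMap
      map_add' _ _ := map_add Λ _ _
      map_smul' _ _ := map_smul Λ _ _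
      monotone' _ _ hle := OrderHomClass.mono Λ hle }
  have hemb : MeasurableEmbedding (Subtype.val : K → E) := .subtype_coe hK.measurableSet
  refine ⟨(RealRMK.rieszMeasure Λc).map Subtype.val, inferInstance, ?_, fun φ hφ ↦ ?_⟩
  · simp [hemb.map_apply]
  · rw [hemb.integral_map]
    exact RealRMK.integral_rieszMeasure Λc
      (CompactlySupportedContinuousMap.continuousMapEquiv ⟨K.domRestrict φ, hφ.domRestrict⟩)

lemma exists_measure_prod_integral_add_integral_eq {E' : Type*} [TopologicalSpace E'] [T2Space E']
    [MeasurableSpace E'] [BorelSpace E'] {K' : Set E'} (hK : IsCompact K) (hK' : IsCompact K')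
    (Λ : C(K, ℝ) × C(K', ℝ) →ₚ[ℝ] ℝ) :
    ∃ (μ : Measure E) (ν : Measure E'), (IsFiniteMeasure μ ∧ μ Kᶜ = 0) ∧
      (IsFiniteMeasure ν ∧ ν K'ᶜ = 0) ∧
      ∀ (φ : E → ℝ) (ψ : E' → ℝ) (hφ : ContinuousOn φ K) (hψ : ContinuousOn ψ K'),
        ∫ z, φ z ∂μ + ∫ y, ψ y ∂ν =
          Λ (⟨K.domRestrict φ, hφ.domRestrict⟩, ⟨K'.domRestrict ψ, hψ.domRestrict⟩) := by
  obtain ⟨μ, hμ_fin, hμ, hμΛ⟩ := exists_measure_integral_eq hK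
    (.mk₀ (Λ.toLinearMap ∘ₗ .inl ℝ _ _) fun φ hφ ↦ map_nonneg Λ (Prod.mk_le_mk.mpr ⟨hφ, le_rfl⟩))
  obtain ⟨ν, hν_fin, hν, hνΛ⟩ := exists_measure_integral_eq hK'
    (.mk₀ (Λ.toLinearMap ∘ₗ .inr ℝ _ _) fun ψ hψ ↦ map_nonneg Λ (Prod.mk_le_mk.mpr ⟨le_rfl, hψ⟩))
  refine ⟨μ, ν, ⟨hμ_fin, hμ⟩, ⟨hν_fin, hν⟩, fun φ ψ hφ hψ ↦ ?_⟩
  rw [hμΛ φ hφ, hνΛ ψ hψ]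
  exact (map_add Λ _ _).symm.trans (congrArg Λ (by simp))

end CompactSupport

section WeakControl

variable {E U : Type*} [NormedAddCommGroup E] [NormedSpace ℝ E]

/-- The Liouville operator `L_F v (t, x, u) = ∂v/∂t + D_x v · F(t, x, u)`, written as the total
derivative of `v` at `(t, x)` in the direction `(1, F(t, x, u))`. -/
def liouvilleOp (F : ℝ × E × U → E) (v : ℝ × E → ℝ) (z : ℝ × E × U) : ℝ :=
  fderiv ℝ v (z.1, z.2.1) (1, F z)

/-- A pair of occupation measures for the dynamics `F`: `μ` on trajectories in `K`, `μT` on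
terminal states in `XT`, linked by Liouville's equation started at `x₀`. These are the feasible
points of the classical weak formulation of the optimal control problem. -/
structure IsOccupationPair [MeasurableSpace E] [MeasurableSpace U] (K : Set (ℝ × E × U))
    (XT : Set E) (T : ℝ) (x₀ : E) (F : ℝ × E × U → E) (μ : Measure (ℝ × E × U))
    (μT : Measure E) : Prop where
  isFiniteMeasure : IsFiniteMeasure μ
  isFiniteMeasure_terminal : IsFiniteMeasure μT
  measure_compl : μ Kᶜ = 0
  measure_terminal_compl : μT XTᶜ = 0
  liouville : ∀ v : ℝ × E → ℝ, ContDiff ℝ 1 v →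
    v (0, x₀) + ∫ z, liouvilleOp F v z ∂μ = ∫ y, v (T, y) ∂μT

/-- A smooth subsolution of the Hamilton–Jacobi–Bellman equation with running cost `h` and terminal
cost `H`. These are the feasible points of the dual of the classical weak formulation. -/
structure IsSubsolution (K : Set (ℝ × E × U)) (XT : Set E) (T : ℝ) (F : ℝ × E × U → E)
    (h : ℝ × E × U → ℝ) (H : E → ℝ) (v : ℝ × E → ℝ) : Prop where
  contDiff : ContDiff ℝ 1 v
  nonneg : ∀ z ∈ K, 0 ≤ liouvilleOp F v z + h z
  terminal_le : ∀ x ∈ XT, v (T, x) ≤ H x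

variable {K : Set (ℝ × E × U)} {XT : Set E} {T : ℝ} {x₀ : E} {F : ℝ × E × U → E}
  {h : ℝ × E × U → ℝ} {H : E → ℝ} {v w : ℝ × E → ℝ}

variable (K XT T x₀ F h H) in
/-- The costs `∫ h dμ + ∫ H dμT` of the occupation pairs. -/
def occupationCosts [MeasurableSpace E] [MeasurableSpace U] : Set ℝ :=
  {c | ∃ μ μT, IsOccupationPair K XT T x₀ F μ μT ∧ c = ∫ z, h z ∂μ + ∫ y, H y ∂μT}

variable (K XT T x₀ F h H) in
/-- The values at the initial point `(0, x₀)` of the smooth subsolutions. -/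
def subsolutionValues : Set ℝ :=
  {d | ∃ v, IsSubsolution K XT T F h H v ∧ d = v (0, x₀)}

lemma liouvilleOp_add (hv : ContDiff ℝ 1 v) (hw : ContDiff ℝ 1 w) (z : ℝ × E × U) :
    liouvilleOp F (v + w) z = liouvilleOp F v z + liouvilleOp F w z := by
  rw [liouvilleOp, fderiv_add (hv.differentiable one_ne_zero _) (hw.differentiable one_ne_zero _)]
  rfl

lemma liouvilleOp_const_smul (c : ℝ) (z : ℝ × E × U) :
    liouvilleOp F (c • v) z = c • liouvilleOp F v z := by
  rw [liouvilleOp, fderiv_const_smul_field]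
  rfl

lemma liouvilleOp_affine_time (a b : ℝ) (z : ℝ × E × U) :
    liouvilleOp F (fun y ↦ a * y.1 + b) z = a := by
  have hderiv : HasFDerivAt (fun y : ℝ × E ↦ a * y.1 + b) (a • .fst ℝ ℝ E) (z.1, z.2.1) :=
    (hasFDerivAt_fst.const_mul a).add_const b
  simp [liouvilleOp, hderiv.fderiv]

variable (E) in
/-- The space of `C¹` test functions on `ℝ × E`. -/
def testFunctions : Submodule ℝ (ℝ × E → ℝ) where
  carrier := {v | ContDiff ℝ 1 v}
  add_mem' := by
    simp only [mem_ofPred_eq]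
    exact ContDiff.add
  zero_mem' := by
    simp only [mem_ofPred_eq]
    exact contDiff_const
  smul_mem' c v := by
    simp only [mem_ofPred_eq]
    exact ContDiff.const_smul c

lemma mem_testFunctions : v ∈ testFunctions E ↔ ContDiff ℝ 1 v := Iff.rfl

variable [TopologicalSpace U]

lemma continuousOn_liouvilleOp (hF : ContinuousOn F K)
    (hv : ContDiff ℝ 1 v) : ContinuousOn (liouvilleOp F v) K :=
  ((hv.continuous_fderiv one_ne_zero).comp (by fun_prop)).continuousOn.clm_apply
    (continuousOn_const.prodMk hF)

/-- The constraint operator `v ↦ (-L_F v, v(T, ·))` of the dual linear program, with values in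
continuous functions on `K` and on `XT`. With this sign the dual constraint reads
`liouvilleMap v ≤ (h, H)`. -/
def liouvilleMap (XT : Set E) (T : ℝ) (hF : ContinuousOn F K) :
    testFunctions E →ₗ[ℝ] C(K, ℝ) × C(XT, ℝ) where
  toFun v :=
    (⟨K.domRestrict fun z ↦ -liouvilleOp F v z,
        (continuousOn_liouvilleOp hF (mem_testFunctions.mp v.2)).neg.domRestrict⟩,
      ⟨XT.domRestrict fun y ↦ v.1 (T, y),
        ((mem_testFunctions.mp v.2).continuous.comp (by fun_prop)).continuousOn.domRestrict⟩)
  map_add' v w := by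
    refine Prod.ext (ContinuousMap.ext fun z ↦ ?_) rfl
    exact (congrArg _ (liouvilleOp_add v.2 w.2 z.1)).trans (neg_add _ _)
  map_smul' c v := by
    refine Prod.ext (ContinuousMap.ext fun z ↦ ?_) rfl
    exact (congrArg _ (liouvilleOp_const_smul c z.1)).trans (smul_neg _ _).symm

lemma liouvilleMap_le_iff (hF : ContinuousOn F K) (hh : ContinuousOn h K) (hH : ContinuousOn H XT)
    (v : testFunctions E) :
    liouvilleMap XT T hF v ≤
        (⟨K.domRestrict h, hh.domRestrict⟩, ⟨XT.domRestrict H, hH.domRestrict⟩) ↔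
      IsSubsolution K XT T F h H v := by
  refine Prod.mk_le_mk.trans ⟨fun ⟨hL, hT⟩ ↦ ⟨v.2, fun z hz ↦ ?_, fun y hy ↦ hT ⟨y, hy⟩⟩,
    fun hv ↦ ⟨fun z ↦ ?_, fun y ↦ hv.terminal_le y y.2⟩⟩
  · exact neg_le_iff_add_nonneg'.mp (hL ⟨z, hz⟩)
  · exact neg_le_iff_add_nonneg'.mpr (hv.nonneg z z.2)

lemma exists_le_liouvilleMap (hK : IsCompact K) (hXT : IsCompact XT) (hF : ContinuousOn F K)
    (e : C(K, ℝ) × C(XT, ℝ)) : ∃ v, e ≤ liouvilleMap XT T hF v := by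
  have := isCompact_iff_compactSpace.mp hK
  have := isCompact_iff_compactSpace.mp hXT
  let v (y : ℝ × E) : ℝ := -‖e.1‖ * y.1 + (‖e.2‖ + ‖e.1‖ * T)
  have hv : ContDiff ℝ 1 v := (contDiff_const.mul contDiff_fst).add contDiff_const
  refine ⟨⟨v, hv⟩, fun z ↦ ?_, fun y ↦ ?_⟩
  · calc e.1 z ≤ ‖e.1‖ := e.1.apply_le_norm z
      _ = -liouvilleOp F v z := by rw [liouvilleOp_affine_time, neg_neg]
  · calc e.2 y ≤ ‖e.2‖ := e.2.apply_le_norm y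
      _ = v (T, y) := by simp [v]

variable [MeasurableSpace E] [BorelSpace E] [SecondCountableTopology E]
  [T2Space U] [MeasurableSpace U] [BorelSpace U]

theorem IsSubsolution.le_integral_add_integral (hK : IsCompact K) (hXT : IsCompact XT)
    (hF : ContinuousOn F K) (hh : ContinuousOn h K) (hH : ContinuousOn H XT)
    {μ : Measure (ℝ × E × U)} {μT : Measure E} (hv : IsSubsolution K XT T F h H v)
    (hμ : IsOccupationPair K XT T x₀ F μ μT) :
    v (0, x₀) ≤ ∫ z, h z ∂μ + ∫ y, H y ∂μT := by
  have := hμ.isFiniteMeasure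
  have := hμ.isFiniteMeasure_terminal
  have hLv := continuousOn_liouvilleOp hF hv.contDiff
  have hvT : Continuous fun y ↦ v (T, y) := hv.contDiff.continuous.comp (by fun_prop)
  have hrunning : -∫ z, liouvilleOp F v z ∂μ ≤ ∫ z, h z ∂μ := by
    rw [← integral_neg]
    refine integral_mono_ae
      (integrable_of_continuousOn_of_measure_compl hK hμ.measure_compl hLv.neg)
      (integrable_of_continuousOn_of_measure_compl hK hμ.measure_compl hh) ?_
    filter_upwards [mem_ae_iff.mpr hμ.measure_compl] with z hz
    exact neg_le_iff_add_nonneg'.mpr (hv.nonneg z hz)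
  have hterminal : ∫ y, v (T, y) ∂μT ≤ ∫ y, H y ∂μT := by
    refine integral_mono_ae
      (integrable_of_continuousOn_of_measure_compl hXT hμ.measure_terminal_compl hvT.continuousOn)
      (integrable_of_continuousOn_of_measure_compl hXT hμ.measure_terminal_compl hH) ?_
    filter_upwards [mem_ae_iff.mpr hμ.measure_terminal_compl] with y hy using hv.terminal_le y hy
  linarith [hμ.liouville v hv.contDiff]

theorem exists_isLeast_occupationCosts_isLUB_subsolutionValues (hK : IsCompact K)
    (hXT : IsCompact XT) (hF : ContinuousOn F K) (hh : ContinuousOn h K) (hH : ContinuousOn H XT)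
    (hfeas : (occupationCosts K XT T x₀ F h H).Nonempty) :
    ∃ d, IsLeast (occupationCosts K XT T x₀ F h H) d ∧
      IsLUB (subsolutionValues K XT T x₀ F h H) d := by
  let A := liouvilleMap XT T hF
  let l : testFunctions E →ₗ[ℝ] ℝ := .proj (0, x₀) ∘ₗ (testFunctions E).subtype
  let c : C(K, ℝ) × C(XT, ℝ) :=
    (⟨K.domRestrict h, hh.domRestrict⟩, ⟨XT.domRestrict H, hH.domRestrict⟩)
  have hweak : occupationCosts K XT T x₀ F h H ⊆
      upperBounds (subsolutionValues K XT T x₀ F h H) := by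
    rintro - ⟨μ, μT, hμ, rfl⟩ - ⟨v, hv, rfl⟩
    exact hv.le_integral_add_integral hK hXT hF hh hH hμ
  have hvalues : l '' {v | A v ≤ c} = subsolutionValues K XT T x₀ F h H := by
    ext d
    constructor
    · rintro ⟨v, hv, rfl⟩
      exact ⟨v, (liouvilleMap_le_iff hF hh hH v).mp hv, rfl⟩
    · rintro ⟨v, hv, rfl⟩
      exact ⟨⟨v, hv.contDiff⟩, (liouvilleMap_le_iff hF hh hH _).mpr hv, rfl⟩
  obtain ⟨Λ, hΛA, hlub⟩ := exists_positiveLinearMap_isLUB A l c (exists_le_liouvilleMap hK hXT hF)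
    (hvalues ▸ hfeas.mono hweak)
  rw [hvalues] at hlub
  obtain ⟨μ, μT, ⟨hμ_fin, hμ⟩, ⟨hμT_fin, hμT⟩, hint⟩ :=
    exists_measure_prod_integral_add_integral_eq hK hXT Λ
  have hliouville (v : ℝ × E → ℝ) (hv : ContDiff ℝ 1 v) :
      v (0, x₀) + ∫ z, liouvilleOp F v z ∂μ = ∫ y, v (T, y) ∂μT := by
    have hvT : Continuous fun y ↦ v (T, y) := hv.continuous.comp (by fun_prop)
    have hrep : ∫ z, -liouvilleOp F v z ∂μ + ∫ y, v (T, y) ∂μT = v (0, x₀) :=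
      (hint _ _ (continuousOn_liouvilleOp hF hv).neg hvT.continuousOn).trans (hΛA ⟨v, hv⟩)
    rw [integral_neg] at hrep
    linarith
  exact ⟨Λ c, ⟨⟨μ, μT, ⟨hμ_fin, hμT_fin, hμ, hμT, hliouville⟩, (hint h H hh hH).symm⟩,
    fun _ hc ↦ hlub.2 (hweak hc)⟩, hlub⟩

end WeakControl

section WeightedMarginal

variable {α β : Type*} [MeasurableSpace α] [MeasurableSpace β] {μ : Measure α} {π : α → β}
  {ρ : α → ℝ}

/-- The pushforward under `π` of the measure with density `ρ` with respect to `μ`. Negative values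
of `ρ` are clipped to zero, so that `ρ` and `-ρ` give the pushforwards of the positive and the
negative part of the signed measure `ρ μ`. -/
def weightedMarginal (μ : Measure α) (π : α → β) (ρ : α → ℝ) : Measure β :=
  (μ.withDensity fun z ↦ ENNReal.ofReal (ρ z)).map π

lemma weightedMarginal_absolutelyContinuous (hπ : Measurable π) :
    weightedMarginal μ π ρ ≪ μ.map π :=
  (withDensity_absolutelyContinuous μ _).map hπ

lemma isFiniteMeasure_weightedMarginal (hρ : Integrable ρ μ) :
    IsFiniteMeasure (weightedMarginal μ π ρ) := by
  have := isFiniteMeasure_withDensity_ofReal hρ.hasFiniteIntegral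
  exact Measure.isFiniteMeasure_map _ π

lemma ofReal_add_ofReal_neg_add_ofReal_one_sub_abs {x : ℝ} (hx : |x| ≤ 1) :
    ENNReal.ofReal x + ENNReal.ofReal (-x) + ENNReal.ofReal (1 - |x|) = 1 := by
  have habs : ENNReal.ofReal x + ENNReal.ofReal (-x) = ENNReal.ofReal |x| := by
    rcases le_total 0 x with hx₀ | hx₀
    · simp [hx₀, abs_of_nonneg]
    · simp [hx₀, abs_of_nonpos]
  rw [habs, ← ENNReal.ofReal_add (abs_nonneg x) (sub_nonneg.mpr hx), add_sub_cancel,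
    ENNReal.ofReal_one]

lemma weightedMarginal_add_neg_add_one_sub_abs (hπ : Measurable π) (hρ : Measurable ρ)
    (hρ_le : ∀ᵐ z ∂μ, |ρ z| ≤ 1) :
    weightedMarginal μ π ρ + weightedMarginal μ π (-ρ) + weightedMarginal μ π (1 - |ρ|) =
      μ.map π := by
  simp only [weightedMarginal]
  rw [← Measure.map_add _ _ hπ, ← Measure.map_add _ _ hπ,
    ← withDensity_add_left hρ.ennreal_ofReal,
    ← withDensity_add_left (hρ.ennreal_ofReal.add hρ.neg.ennreal_ofReal)]
  congr 1
  conv_rhs => rw [← withDensity_one (μ := μ)]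
  refine withDensity_congr_ae ?_
  filter_upwards [hρ_le] with z hz using ofReal_add_ofReal_neg_add_ofReal_one_sub_abs hz

lemma integral_weightedMarginal (hπ : Measurable π) (hρ : AEMeasurable ρ μ) {φ : β → ℝ}
    (hφ : AEStronglyMeasurable φ (μ.map π)) :
    ∫ y, φ y ∂weightedMarginal μ π ρ = ∫ z, max (ρ z) 0 * φ (π z) ∂μ := by
  rw [weightedMarginal, integral_map hπ.aemeasurable
      (hφ.mono_ac (weightedMarginal_absolutelyContinuous hπ)),
    integral_withDensity_eq_integral_toReal_smul₀ hρ.ennreal_ofReal (by simp)]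
  simp only [ENNReal.toReal_ofReal', smul_eq_mul]

lemma integral_weightedMarginal_sub_neg (hπ : Measurable π) (hρ : AEMeasurable ρ μ) {φ : β → ℝ}
    (hφ : AEStronglyMeasurable φ (μ.map π)) (hint : Integrable (fun z ↦ ρ z * φ (π z)) μ) :
    ∫ y, φ y ∂weightedMarginal μ π ρ - ∫ y, φ y ∂weightedMarginal μ π (-ρ) =
      ∫ z, ρ z * φ (π z) ∂μ := by
  have hφπ : AEStronglyMeasurable (fun z ↦ φ (π z)) μ := hφ.comp_measurable hπ
  have hpart {σ : α → ℝ} (hσ : AEMeasurable σ μ) (hle : ∀ z, |σ z| ≤ |ρ z|) :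
      Integrable (fun z ↦ max (σ z) 0 * φ (π z)) μ := by
    refine hint.mono ((hσ.max aemeasurable_const).aestronglyMeasurable.mul hφπ)
      (ae_of_all _ fun z ↦ ?_)
    have hmax : ‖max (σ z) 0‖ ≤ ‖ρ z‖ := by
      rw [Real.norm_of_nonneg (le_max_right _ _)]
      exact max_le ((le_abs_self _).trans (hle z)) (norm_nonneg _)
    simpa only [norm_mul] using mul_le_mul_of_nonneg_right hmax (norm_nonneg _)
  rw [integral_weightedMarginal hπ hρ hφ, integral_weightedMarginal hπ hρ.neg hφ,
    ← integral_sub (hpart hρ fun _ ↦ le_rfl) (hpart hρ.neg fun z ↦ (abs_neg (ρ z)).le)]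
  simp only [← sub_mul, Pi.neg_apply, max_zero_sub_eq_self]

end WeightedMarginal

section ControlAffine

variable {n m : ℕ} {T : ℝ} {X XT : Set (Fin n → ℝ)} {x₀ : Fin n → ℝ}
  {f : ℝ × (Fin n → ℝ) → Fin n → ℝ} {g : ℝ × (Fin n → ℝ) → Fin n → Fin m → ℝ}
  {h : ℝ × (Fin n → ℝ) × (Fin m → ℝ) → ℝ} {H : (Fin n → ℝ) → ℝ} {v : ℝ × (Fin n → ℝ) → ℝ}
  {μ : Measure (ℝ × (Fin n → ℝ) × (Fin m → ℝ))} {μT : Measure (Fin n → ℝ)}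

/-- The projection `(t, x, u) ↦ (t, x)` that forgets the control. -/
abbrev timeState (z : ℝ × (Fin n → ℝ) × (Fin m → ℝ)) : ℝ × (Fin n → ℝ) := (z.1, z.2.1)

lemma LFop_eq_liouvilleOp : LFop f g v = liouvilleOp (Fvec f g) v := by
  ext z
  have hdir : ((1, Fvec f g z) : ℝ × (Fin n → ℝ)) =
      (1, 0) + ∑ k, Fvec f g z k • (0, Pi.single k 1) := by
    refine Prod.ext ?_ ?_
    · simp [Prod.fst_sum]
    · simpa [Prod.snd_sum] using pi_eq_sum_univ' (Fvec f g z)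
  rw [liouvilleOp, hdir, map_add, map_sum]
  simp only [map_smul, smul_eq_mul, LFop, mul_comm]

lemma LFop_eq_Lfop_add_sum (z : ℝ × (Fin n → ℝ) × (Fin m → ℝ)) :
    LFop f g v z = Lfop f v (timeState z) + ∑ j, z.2.2 j * Lgop g v j (timeState z) := by
  simp only [LFop, Lfop, Lgop, Fvec, mul_add, Finset.sum_add_distrib, Finset.mul_sum, add_assoc]
  rw [Finset.sum_comm]
  simp only [mul_comm, mul_assoc]

lemma continuous_fderiv_apply_const (hv : ContDiff ℝ 1 v) (e : ℝ × (Fin n → ℝ)) :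
    Continuous fun y ↦ fderiv ℝ v y e :=
  (hv.continuous_fderiv one_ne_zero).clm_apply continuous_const

lemma continuousOn_Lfop {s : Set (ℝ × (Fin n → ℝ))} (hf : ContinuousOn f s)
    (hv : ContDiff ℝ 1 v) :
    ContinuousOn (Lfop f v) s :=
  (continuous_fderiv_apply_const hv _).continuousOn.add <| continuousOn_finsetSum _ fun k _ ↦
    (continuous_fderiv_apply_const hv _).continuousOn.mul (continuousOn_pi.mp hf k)

lemma continuousOn_Lgop {s : Set (ℝ × (Fin n → ℝ))} (hg : ContinuousOn g s)
    (hv : ContDiff ℝ 1 v) (j : Fin m) :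
    ContinuousOn (Lgop g v j) s :=
  continuousOn_finsetSum _ fun k _ ↦ (continuous_fderiv_apply_const hv _).continuousOn.mul
    (continuousOn_pi.mp (continuousOn_pi.mp hg k) j)

lemma mapsTo_timeState :
    MapsTo timeState (Icc 0 T ×ˢ X ×ˢ Ubox m) (Icc 0 T ×ˢ X) :=
  fun _ hz ↦ ⟨hz.1, hz.2.1⟩

lemma continuousOn_Fvec (hf : ContinuousOn f (Icc 0 T ×ˢ X))
    (hg : ContinuousOn g (Icc 0 T ×ˢ X)) :
    ContinuousOn (Fvec f g) (Icc 0 T ×ˢ X ×ˢ Ubox m) := by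
  have hf' := hf.comp (by fun_prop) (mapsTo_timeState (m := m))
  have hg' := hg.comp (by fun_prop) (mapsTo_timeState (m := m))
  exact continuousOn_pi.mpr fun k ↦ (continuousOn_pi.mp hf' k).add <|
    continuousOn_finsetSum _ fun j _ ↦
      (continuousOn_pi.mp (continuousOn_pi.mp hg' k) j).mul (by fun_prop)

lemma isCompact_prod_Ubox (hX : IsCompact X) : IsCompact (Icc 0 T ×ˢ X ×ˢ Ubox m) :=
  isCompact_Icc.prod (hX.prod isCompact_Icc)

lemma abs_le_one_of_mem_Ubox {u : Fin m → ℝ} (hu : u ∈ Ubox m) (j : Fin m) : |u j| ≤ 1 :=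
  abs_le.mpr ⟨hu.1 j, hu.2 j⟩

variable (T X XT x₀ f g h H) in
/-- The values `v(0, x₀)` of the feasible points of `(D)`. -/
def dualValues : Set ℝ :=
  {d | ∃ v w p q, DFeasible T X XT f g h H v w p q ∧ d = v (0, x₀)}

lemma LFop_le_Lfop_add_sum {p : Fin m → ℝ} {z : ℝ × (Fin n → ℝ) × (Fin m → ℝ)}
    (hz : z.2.2 ∈ Ubox m) (hp : ∀ j, |Lgop g v j (timeState z)| ≤ p j) :
    LFop f g v z ≤ Lfop f v (timeState z) + ∑ j, p j := by
  rw [LFop_eq_Lfop_add_sum]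
  gcongr with j
  calc z.2.2 j * Lgop g v j (timeState z)
      ≤ |z.2.2 j| * |Lgop g v j (timeState z)| := (le_abs_self _).trans (abs_mul _ _).le
    _ ≤ 1 * p j := by
      gcongr
      · exact abs_le_one_of_mem_Ubox hz j
      · exact hp j
    _ = p j := one_mul _

lemma exists_dFeasible_iff :
    (∃ w p q, DFeasible T X XT f g h H v w p q) ↔
      IsSubsolution (Icc 0 T ×ˢ X ×ˢ Ubox m) XT T (Fvec f g) h H v := by
  constructor
  · rintro ⟨w, p, q, hv, -, -, -, hrunning, hterminal, hmult, hp, -⟩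
    refine ⟨hv, fun z hz ↦ ?_, hterminal⟩
    rw [← LFop_eq_liouvilleOp]
    linarith [hrunning z hz, hmult _ (mapsTo_timeState hz),
      LFop_le_Lfop_add_sum (f := f) hz.2.2 fun j ↦ hp j _ (mapsTo_timeState hz)]
  · rintro ⟨hv, hrunning, hterminal⟩
    refine ⟨0, 0, 0, hv, contDiff_const, fun _ ↦ continuous_const, continuous_const,
      fun z hz ↦ ?_, hterminal, ?_, ?_, ?_⟩
    · simpa [LFop_eq_liouvilleOp, liouvilleOp] using hrunning z hz
    · simp [Lfop]
    · simp [Lgop]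
    · simp

lemma dualValues_eq_subsolutionValues :
    dualValues T X XT x₀ f g h H =
      subsolutionValues (Icc 0 T ×ˢ X ×ˢ Ubox m) XT T x₀ (Fvec f g) h H := by
  ext d
  simp only [dualValues, subsolutionValues, mem_ofPred_eq, ← exists_dFeasible_iff,
    exists_and_right]

variable (T X XT x₀ f g h H) in
/-- The costs `∫ h dμ + ∫ H dμT` of the feasible points of `(P)`. -/
def primalValues : Set ℝ :=
  {c | ∃ μ μT γ σp σm σh, PFeasible T X XT x₀ f g μ μT γ σp σm σh ∧
    c = ∫ z, h z ∂μ + ∫ y, H y ∂μT}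

lemma map_timeState_compl (hX : IsCompact X) (hμ : μ (Icc 0 T ×ˢ X ×ˢ Ubox m)ᶜ = 0) :
    μ.map timeState (Icc 0 T ×ˢ X)ᶜ = 0 := by
  rw [Measure.map_apply (by fun_prop) (isCompact_Icc.prod hX).measurableSet.compl]
  exact measure_mono_null (fun _ hz hmem ↦ hz (mapsTo_timeState hmem)) hμ

lemma integral_LFop_eq_integral_Lfop_add_sum [IsFiniteMeasure μ] (hX : IsCompact X)
    (hf : ContinuousOn f (Icc 0 T ×ˢ X)) (hg : ContinuousOn g (Icc 0 T ×ˢ X))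
    (hμ : μ (Icc 0 T ×ˢ X ×ˢ Ubox m)ᶜ = 0) (hv : ContDiff ℝ 1 v) :
    ∫ z, LFop f g v z ∂μ = ∫ y, Lfop f v y ∂μ.map timeState +
      ∑ j, (∫ y, Lgop g v j y ∂weightedMarginal μ timeState (fun z ↦ z.2.2 j) -
        ∫ y, Lgop g v j y ∂weightedMarginal μ timeState (-fun z ↦ z.2.2 j)) := by
  have hmarginal {φ : ℝ × (Fin n → ℝ) → ℝ} (hφ : ContinuousOn φ (Icc 0 T ×ˢ X)) :
      AEStronglyMeasurable φ (μ.map timeState) :=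
    (integrable_of_continuousOn_of_measure_compl (isCompact_Icc.prod hX)
      (map_timeState_compl hX hμ) hφ).aestronglyMeasurable
  have hint {φ : ℝ × (Fin n → ℝ) × (Fin m → ℝ) → ℝ}
      (hφ : ContinuousOn φ (Icc 0 T ×ˢ X ×ˢ Ubox m)) : Integrable φ μ :=
    integrable_of_continuousOn_of_measure_compl (isCompact_prod_Ubox hX) hμ hφ
  have hLf := continuousOn_Lfop hf hv
  have hLg := continuousOn_Lgop hg hv
  have hLfμ : Integrable (fun z ↦ Lfop f v (timeState z)) μ :=
    hint (hLf.comp (by fun_prop) mapsTo_timeState)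
  have hLgμ (j : Fin m) : Integrable (fun z ↦ z.2.2 j * Lgop g v j (timeState z)) μ :=
    hint (.mul (by fun_prop) ((hLg j).comp (by fun_prop) mapsTo_timeState))
  calc ∫ z, LFop f g v z ∂μ
      = ∫ z, Lfop f v (timeState z) ∂μ + ∑ j, ∫ z, z.2.2 j * Lgop g v j (timeState z) ∂μ := by
        simp only [LFop_eq_Lfop_add_sum]
        rw [integral_add hLfμ (integrable_finsetSum _ fun j _ ↦ hLgμ j),
          integral_finsetSum _ fun j _ ↦ hLgμ j]
    _ = _ := by
      rw [integral_map (by fun_prop) (hmarginal hLf)]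
      congr! 2 with j
      exact (integral_weightedMarginal_sub_neg (by fun_prop) (by fun_prop) (hmarginal (hLg j))
        (hLgμ j)).symm

lemma exists_pFeasible_iff (hX : IsCompact X) (hf : ContinuousOn f (Icc 0 T ×ˢ X))
    (hg : ContinuousOn g (Icc 0 T ×ˢ X)) :
    (∃ γ σp σm σh, PFeasible T X XT x₀ f g μ μT γ σp σm σh) ↔
      IsOccupationPair (Icc 0 T ×ˢ X ×ˢ Ubox m) XT T x₀ (Fvec f g) μ μT := by
  constructor
  · rintro ⟨γ, σp, σm, σh, hμ_fin, hμT_fin, -, -, hμ, hμT, -, -, hliouville, -⟩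
    exact ⟨hμ_fin, hμT_fin, hμ, hμT, by
      simpa only [SatisfiesLiouville, LFop_eq_liouvilleOp] using hliouville⟩
  · rintro ⟨hμ_fin, hμT_fin, hμ, hμT, hliouville⟩
    have hfin {ρ : ℝ × (Fin n → ℝ) × (Fin m → ℝ) → ℝ} (hρ : Continuous ρ) :
        IsFiniteMeasure (weightedMarginal μ timeState ρ) :=
      isFiniteMeasure_weightedMarginal <|
        integrable_of_continuousOn_of_measure_compl (isCompact_prod_Ubox hX) hμ hρ.continuousOn
    have hsupp (ρ : ℝ × (Fin n → ℝ) × (Fin m → ℝ) → ℝ) :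
        weightedMarginal μ timeState ρ (Icc 0 T ×ˢ X)ᶜ = 0 :=
      weightedMarginal_absolutelyContinuous (by fun_prop) (map_timeState_compl hX hμ)
    have hbound (j : Fin m) : ∀ᵐ z ∂μ, |z.2.2 j| ≤ 1 := by
      filter_upwards [mem_ae_iff.mpr hμ] with z hz using abs_le_one_of_mem_Ubox hz.2.2 j
    have hslack (j : Fin m) :
        Continuous (1 - |fun z : ℝ × (Fin n → ℝ) × (Fin m → ℝ) ↦ z.2.2 j|) :=
      continuous_const.sub (continuous_abs.comp (by fun_prop))
    refine ⟨μ.map timeState,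
      fun j ↦ weightedMarginal μ timeState fun z ↦ z.2.2 j,
      fun j ↦ weightedMarginal μ timeState (-fun z ↦ z.2.2 j),
      fun j ↦ weightedMarginal μ timeState (1 - |fun z ↦ z.2.2 j|),
      hμ_fin, hμT_fin, inferInstance,
      fun j ↦ ⟨hfin (by fun_prop), hfin (by fun_prop), hfin (hslack j)⟩,
      hμ, hμT, map_timeState_compl hX hμ, fun j ↦ ⟨hsupp _, hsupp _, hsupp _⟩, ?_,
      fun v hv ↦ integral_LFop_eq_integral_Lfop_add_sum hX hf hg hμ hv, fun j ↦ ?_, rfl⟩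
    · simpa only [SatisfiesLiouville, LFop_eq_liouvilleOp] using hliouville
    · exact weightedMarginal_add_neg_add_one_sub_abs (by fun_prop) (by fun_prop) (hbound j)

lemma primalValues_eq_occupationCosts (hX : IsCompact X) (hf : ContinuousOn f (Icc 0 T ×ˢ X))
    (hg : ContinuousOn g (Icc 0 T ×ˢ X)) :
    primalValues T X XT x₀ f g h H =
      occupationCosts (Icc 0 T ×ˢ X ×ˢ Ubox m) XT T x₀ (Fvec f g) h H := by
  ext c
  simp only [primalValues, occupationCosts, mem_ofPred_eq, ← exists_pFeasible_iff hX hf hg,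
    exists_and_right]

end ControlAffine

theorem strong_duality_general {n m : ℕ} {T : ℝ} {X XT : Set (Fin n → ℝ)} {x₀ : Fin n → ℝ}
    {f : ℝ × (Fin n → ℝ) → Fin n → ℝ} {g : ℝ × (Fin n → ℝ) → Fin n → Fin m → ℝ}
    {h : ℝ × (Fin n → ℝ) × (Fin m → ℝ) → ℝ} {H : (Fin n → ℝ) → ℝ}
    (hX : IsCompact X) (hXT : IsCompact XT)
    (hf : ContinuousOn f (Icc 0 T ×ˢ X)) (hg : ContinuousOn g (Icc 0 T ×ˢ X))
    (hh : ContinuousOn h (Icc 0 T ×ˢ X ×ˢ Ubox m)) (hH : ContinuousOn H XT)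
    (hfeas : (primalValues T X XT x₀ f g h H).Nonempty) :
    ∃ d, IsLeast (primalValues T X XT x₀ f g h H) d ∧ IsLUB (dualValues T X XT x₀ f g h H) d := by
  rw [primalValues_eq_occupationCosts hX hf hg] at hfeas ⊢
  rw [dualValues_eq_subsolutionValues]
  exact exists_isLeast_occupationCosts_isLUB_subsolutionValues (isCompact_prod_Ubox hX) hXT
    (continuousOn_Fvec hf hg) hh hH hfeas

/-- strong duality between `(P)` and `(D)`: if `(P)` is feasible, then the
infimum of `(P)` equals the supremum of `(D)`. -/
theorem strong_duality
    {n m : ℕ} (hn : 0 < n) (hm : 0 < m) (T : ℝ) (hT : 0 < T)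
    (X XT : Set (Fin n → ℝ)) (hX : IsCompact X) (hXT : IsCompact XT) (hXTsub : XT ⊆ X)
    (x₀ : Fin n → ℝ) (hx₀ : x₀ ∈ X)
    (f : ℝ × (Fin n → ℝ) → Fin n → ℝ) (g : ℝ × (Fin n → ℝ) → Fin n → Fin m → ℝ)
    (hf : ContinuousOn f (Set.Icc (0 : ℝ) T ×ˢ Set.univ))
    (hg : ContinuousOn g (Set.Icc (0 : ℝ) T ×ˢ Set.univ))
    (h : ℝ × (Fin n → ℝ) × (Fin m → ℝ) → ℝ) (H : (Fin n → ℝ) → ℝ)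
    (hh : Continuous h) (hH : Continuous H)
    (hPfeas : ∃ (μ : Measure (ℝ × (Fin n → ℝ) × (Fin m → ℝ))) (μT : Measure (Fin n → ℝ))
      (γ : Measure (ℝ × (Fin n → ℝ))) (σp σm σh : Fin m → Measure (ℝ × (Fin n → ℝ))),
      PFeasible T X XT x₀ f g μ μT γ σp σm σh) :
    sInf {c : ℝ | ∃ (μ : Measure (ℝ × (Fin n → ℝ) × (Fin m → ℝ))) (μT : Measure (Fin n → ℝ))
        (γ : Measure (ℝ × (Fin n → ℝ))) (σp σm σh : Fin m → Measure (ℝ × (Fin n → ℝ))),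
        PFeasible T X XT x₀ f g μ μT γ σp σm σh ∧ c = ∫ z, h z ∂μ + ∫ y, H y ∂μT} =
      sSup {d : ℝ | ∃ (v w : ℝ × (Fin n → ℝ) → ℝ) (p : Fin m → ℝ × (Fin n → ℝ) → ℝ)
        (q : ℝ × (Fin n → ℝ) → ℝ),
        DFeasible T X XT f g h H v w p q ∧ d = v (0, x₀)} := by
  have hslab : Icc 0 T ×ˢ X ⊆ Icc 0 T ×ˢ univ := prod_mono_right (subset_univ X)
  obtain ⟨μ, μT, γ, σp, σm, σh, hP⟩ := hPfeas
  obtain ⟨d, hleast, hlub⟩ := strong_duality_general hX hXT (hf.mono hslab) (hg.mono hslab)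
    hh.continuousOn hH.continuousOn ⟨_, μ, μT, γ, σp, σm, σh, hP, rfl⟩
  exact hleast.csInf_eq.trans (hlub.csSup_eq hlub.nonempty).symm

end
end
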